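/- arXiv:0909.0564 — 2 statements merged into one kernel-verified Lean document; each statement's English description precedes it below -/
import Mathlib

section
/- Let v, w ∈ S_n with v ≠ w_0, let i be the last ascent of v, and set z_last = (n−v(i+1)+1, i) ∈ D(v). Suppose ℓ(w s_i) > ℓ(w). Then φ is a bijection from {P ⊆ D(v) : z_last ∈ P} onto the set of all subsets of D(v s_i), and for every P ⊆ D(v) with z_last ∈ P: (link) D(v)∖(P∖{z_last}) is a face of Δ_{v,w} if and only if D(v s_i)∖φ(P) is a face of Δ_{v s_i, w}; (deletion) D(v)∖P is a face of Δ_{v,w} if and only if D(v s_i)∖φ(P) is a face of Δ_{v s_i, w s_i}. -/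
/-!
Boxes of `D(v)` are the non-inversions `j < k`, `v(j) < v(k)` of `v`, placed in column `j` and in
the row of the value `v(k)`.  The values of `v` decrease strictly from position `i + 1` on, so
column `i + 1` of `D(v)` is empty, and `D(v s_i)` arises from `D(v)` by removing `z_last` and moving
column `i` one step to the right (`Rothe_mul_adjSwap`).  Since `z_last` is the last box of its row,
this shift preserves the reading order and all labels, hence also words and reduced pipe dreams
(`image_mem_RedPipes`).  That gives the bijection and the statement about the link.

For the deletion, `z_last` has label `i` (`canonLabel_zlastBox`), and every box read after it has
label at most `i - 2` (`canonLabel_of_after`), so its letter `s_i` can be moved to the end of any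
word containing it (`wordProd_zlast`).  Put `x = w₀ w`; the hypothesis on `w` says that
`ℓ(x s_i) < ℓ(x)`.  Adding `z_last` to a reduced pipe dream for `x s_i` avoiding it gives one for
`x`.  Conversely, from a reduced pipe dream for `x` one obtains one for `x s_i` avoiding `z_last` by
removing `z_last` if it is present, and otherwise by removing the letter provided by the strong
exchange property (`exchange`).

Both steps are computations in the group `S_n`, because for a pipe dream with as many boxes as
the length of its target the Demazure product equals the ordinary product (`mem_RedPipes`).
-/

open Equiv MvPolynomial

noncomputable section
open scoped Classical

variable {n : ℕ}

/-- The 0-based value of a permutation of `Fin n` on a natural number,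
extended by the identity outside `{0, …, n-1}`. -/
def permVal (v : Equiv.Perm (Fin n)) (j : ℕ) : ℕ :=
  if h : j < n then (v ⟨j, h⟩ : ℕ) else j

/-- The longest element `w₀` of the symmetric group, `w₀(i) = n + 1 - i` (1-based). -/
def longest : Equiv.Perm (Fin n) :=
  ⟨Fin.rev, Fin.rev, Fin.rev_rev, Fin.rev_rev⟩

/-- The Rothe diagram of `v`, as a set of 0-based boxes `(i, j)` where `i` counts rows
from the bottom and `j` columns from the left.  In 1-based terms this is
`{(i,j) : i < n - v(j) + 1 and j < v⁻¹(n - i + 1)}`. -/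
def Rothe (v : Equiv.Perm (Fin n)) : Finset (ℕ × ℕ) :=
  (Finset.range n ×ˢ Finset.range n).filter
    (fun p => p.1 + permVal v p.2 + 1 < n ∧ p.2 < permVal v.symm (n - 1 - p.1))

/-- The rank matrix `r^w_{ij} = #{k ≤ j : w(k) ≥ n - i + 1}` (translated to 0-based `i`, `j`). -/
def rankMat (w : Equiv.Perm (Fin n)) (i j : ℕ) : ℕ :=
  ((Finset.range n).filter (fun t => t ≤ j ∧ n ≤ permVal w t + i + 1)).card

/-- Bruhat order via rank matrices. -/
def bruhatLE (u w : Equiv.Perm (Fin n)) : Prop :=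
  ∀ i j : ℕ, rankMat u i j ≤ rankMat w i j

/-- The essential set of `w`. -/
def essentialSet (w : Equiv.Perm (Fin n)) : Finset (ℕ × ℕ) :=
  (Rothe w).filter (fun p => (p.1 + 1, p.2) ∉ Rothe w ∧ (p.1, p.2 + 1) ∉ Rothe w)

/-- The number of inversions (Coxeter length) of a permutation. -/
def invCount (u : Equiv.Perm (Fin n)) : ℕ :=
  ((Finset.univ : Finset (Fin n × Fin n)).filter
    (fun p => p.1 < p.2 ∧ u p.2 < u p.1)).card

/-- The adjacent transposition `s_l` (`l` 1-based) swapping `l` and `l+1`;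
the identity if `l` is out of range. -/
def adjSwap {n : ℕ} (l : ℕ) : Equiv.Perm (Fin n) :=
  if h : 1 ≤ l ∧ l < n then Equiv.swap ⟨l - 1, by omega⟩ ⟨l, h.2⟩ else 1

/-- The canonical (1-based) label of a box of `D(v)`: the `t`-th box from the left in
(1-based) row `i` gets label `i + t - 1`. -/
def canonLabel (v : Equiv.Perm (Fin n)) (b : ℕ × ℕ) : ℕ :=
  b.1 + ((Rothe v).filter (fun b' => b'.1 = b.1 ∧ b'.2 ≤ b.2)).card

/-- The boxes of `P` listed in reading order: rows from top (largest row index) to bottom,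
left to right within each row. -/
def readingList (n : ℕ) (P : Finset (ℕ × ℕ)) : List (ℕ × ℕ) :=
  ((List.range n).reverse).flatMap
    (fun i => ((List.range n).filter (fun j => decide ((i, j) ∈ P))).map (fun j => (i, j)))

/-- One step of the Demazure product: multiply by `s_ℓ` if that increases length. -/
def demStep (v : Equiv.Perm (Fin n)) (u : Equiv.Perm (Fin n)) (b : ℕ × ℕ) :
    Equiv.Perm (Fin n) :=
  if invCount u < invCount (u * adjSwap (canonLabel v b)) then u * adjSwap (canonLabel v b)
  else u

/-- The Demazure product of a pipe dream `P ⊆ D(v)`, scanning boxes in reading order. -/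
def demazure (v : Equiv.Perm (Fin n)) (P : Finset (ℕ × ℕ)) : Equiv.Perm (Fin n) :=
  (readingList n P).foldl (demStep v) 1

/-- Pipe dreams on `D(v)` whose Demazure product is `x`. -/
def Pipes (v x : Equiv.Perm (Fin n)) : Finset (Finset (ℕ × ℕ)) :=
  (Rothe v).powerset.filter (fun P => demazure v P = x)

/-- Reduced pipe dreams on `D(v)` for `x`. -/
def RedPipes (v x : Equiv.Perm (Fin n)) : Finset (Finset (ℕ × ℕ)) :=
  (Pipes v x).filter (fun P => P.card = invCount x)

/-- Faces of the pipe complex `Δ_{v,w}`: subsets `F ⊆ D(v)` such that `D(v) \ F`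
contains a reduced pipe dream for `w₀ w`. -/
def IsFace (v w : Equiv.Perm (Fin n)) (F : Finset (ℕ × ℕ)) : Prop :=
  F ⊆ Rothe v ∧ ∃ P ∈ RedPipes v (longest * w), P ⊆ Rothe v \ F

/-- The staircase `{(i,j) : i + j ≤ n}` (1-based), translated to 0-based boxes. -/
def staircase (n : ℕ) : Finset (ℕ × ℕ) :=
  (Finset.range n ×ˢ Finset.range n).filter (fun p => p.1 + p.2 + 2 ≤ n)

/-- The label `i + j - 1` (1-based) of a staircase box, in 0-based coordinates. -/
def fkLabel (b : ℕ × ℕ) : ℕ := b.1 + b.2 + 1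

/-- One step of the Demazure product for Fomin–Kirillov pipe dreams. -/
def fkStep (u : Equiv.Perm (Fin n)) (b : ℕ × ℕ) : Equiv.Perm (Fin n) :=
  if invCount u < invCount (u * adjSwap (fkLabel b)) then u * adjSwap (fkLabel b) else u

/-- The Demazure product of an FK pipe dream on the staircase. -/
def fkDemazure (n : ℕ) (P : Finset (ℕ × ℕ)) : Equiv.Perm (Fin n) :=
  (readingList n P).foldl fkStep 1

/-- FK pipe dreams on the staircase with Demazure product `x`. -/
def FKPipes (x : Equiv.Perm (Fin n)) : Finset (Finset (ℕ × ℕ)) :=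
  (staircase n).powerset.filter (fun P => fkDemazure n P = x)

/-- Reduced FK pipe dreams for `x`. -/
def RedFKPipes (x : Equiv.Perm (Fin n)) : Finset (Finset (ℕ × ℕ)) :=
  (FKPipes x).filter (fun P => P.card = invCount x)

/-- The coordinate ring `R_v = k[z_{ij} : (i,j) ∈ D(v)]`. -/
abbrev KLRing (k : Type) [Field k] (v : Equiv.Perm (Fin n)) : Type :=
  MvPolynomial {b : ℕ × ℕ // b ∈ Rothe v} k

/-- The specialized generic matrix `Z^{(v)}`: variables on `D(v)`, `1` in positions
`(n - v(j) + 1, j)` (1-based) and `0` elsewhere. -/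
def klMatrix (k : Type) [Field k] (v : Equiv.Perm (Fin n)) :
    Matrix (Fin n) (Fin n) (KLRing k v) := fun i j =>
  if h : ((i : ℕ), (j : ℕ)) ∈ Rothe v then X ⟨((i : ℕ), (j : ℕ)), h⟩
  else if (i : ℕ) + permVal v j + 1 = n then 1 else 0

/-- The minors of size `1 + r^w_{ij}` of the southwest submatrix `Z^{(v)}_{ij}`
(`(i,j)` a 0-based box, so rows `0..i` and columns `0..j`). -/
def minorsAt (k : Type) [Field k] (v w : Equiv.Perm (Fin n)) (i j : ℕ) :
    Set (KLRing k v) :=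
  { d | ∃ ri ci : Fin (rankMat w i j + 1) → Fin n,
      StrictMono ri ∧ StrictMono ci ∧ (∀ a, (ri a : ℕ) ≤ i) ∧ (∀ a, (ci a : ℕ) ≤ j) ∧
      d = ((klMatrix k v).submatrix ri ci).det }

/-- The Kazhdan–Lusztig ideal `I_{v,w}`. -/
def KLIdeal (k : Type) [Field k] (v w : Equiv.Perm (Fin n)) : Ideal (KLRing k v) :=
  Ideal.span { d | ∃ i j : ℕ, i < n ∧ j < n ∧ d ∈ minorsAt k v w i j }

/-- The essential minors of `I_{v,w}`: those at boxes of the essential set of `w`. -/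
def essentialMinors (k : Type) [Field k] (v w : Equiv.Perm (Fin n)) : Set (KLRing k v) :=
  { d | ∃ b ∈ essentialSet w, d ∈ minorsAt k v w b.1 b.2 }

/-- Significance of a variable: `z_{ij} ≻ z_{kl}` iff `j > l` or (`j = l` and `i < k`),
encoded so that larger significance means ≺-larger variable. -/
def sigIdx (n : ℕ) (b : ℕ × ℕ) : ℕ := b.2 * n + (n - 1 - b.1)

/-- The exponent in a monomial of the variable of significance `s`. -/
def expAt {v : Equiv.Perm (Fin n)} (m : {b : ℕ × ℕ // b ∈ Rothe v} →₀ ℕ) (s : ℕ) : ℕ :=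
  ∑ b ∈ m.support, if sigIdx n (b : ℕ × ℕ) = s then m b else 0

/-- The lexicographic comparison of monomials: `m ≻ m'`. -/
def monGT {v : Equiv.Perm (Fin n)} (m m' : {b : ℕ × ℕ // b ∈ Rothe v} →₀ ℕ) : Prop :=
  ∃ s : ℕ, expAt m' s < expAt m s ∧ ∀ t : ℕ, s < t → expAt m t = expAt m' t

/-- `L` is the ≺-leading term of `f`. -/
def IsLeadTerm (k : Type) [Field k] {v : Equiv.Perm (Fin n)} (f L : KLRing k v) : Prop :=
  ∃ m ∈ f.support, (∀ m' ∈ f.support, m' ≠ m → monGT m m') ∧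
    L = MvPolynomial.monomial m (f.coeff m)

/-- The initial ideal of `I` with respect to `≺`: the ideal generated by the leading
terms of all nonzero elements of `I`. -/
def initialIdeal (k : Type) [Field k] {v : Equiv.Perm (Fin n)} (I : Ideal (KLRing k v)) :
    Ideal (KLRing k v) :=
  Ideal.span { L | ∃ f ∈ I, f ≠ 0 ∧ IsLeadTerm k f L }


/-- `i` (1-based) is the last ascent of `v`: `v(i) < v(i+1)` and no ascent occurs later. -/
def IsLastAscent (v : Equiv.Perm (Fin n)) (i : ℕ) : Prop :=
  1 ≤ i ∧ i < n ∧ permVal v (i - 1) < permVal v i ∧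
    ∀ i' : ℕ, i < i' → i' < n → ¬ permVal v (i' - 1) < permVal v i'

/-- The box `z_last = (n - v(i+1) + 1, i)` (1-based), in 0-based coordinates,
where `i` is the last ascent of `v`. -/
def zlastBox (v : Equiv.Perm (Fin n)) (i : ℕ) : ℕ × ℕ :=
  (n - permVal v i - 1, i - 1)

/-- The relabeling map `φ`: delete the box `z_last` and move every other box of
column `i` (1-based) one step to the right. -/
def phiMap (v : Equiv.Perm (Fin n)) (i : ℕ) (P : Finset (ℕ × ℕ)) : Finset (ℕ × ℕ) :=
  P.filter (fun b => b.2 ≠ i - 1) ∪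
    ((P.filter (fun b => b.2 = i - 1 ∧ b.1 ≠ n - permVal v i - 1)).image
      (fun b => (b.1, b.2 + 1)))

/-! ### Inversions and adjacent transpositions -/

lemma adjSwap_mul_self (l : ℕ) : (adjSwap l : Equiv.Perm (Fin n)) * adjSwap l = 1 := by
  unfold adjSwap
  split_ifs
  · exact Equiv.swap_mul_self _ _
  · simp

lemma adjSwap_apply_self (l : ℕ) (p : Fin n) :
    (adjSwap l : Equiv.Perm (Fin n)) ((adjSwap l : Equiv.Perm (Fin n)) p) = p := by
  rw [← Equiv.Perm.mul_apply, adjSwap_mul_self, Equiv.Perm.one_apply]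

/-- An adjacent transposition reverses the order of no pair other than its own. -/
lemma adjSwap_lt_or_eq (l : ℕ) {p q : Fin n} (h : p < q) :
    (adjSwap l : Equiv.Perm (Fin n)) p < (adjSwap l : Equiv.Perm (Fin n)) q ∨
      ((p : ℕ) + 1 = l ∧ (q : ℕ) = l ∧ adjSwap l = Equiv.swap p q) := by
  unfold adjSwap
  split_ifs with hl
  · by_cases hpq : (p : ℕ) + 1 = l ∧ (q : ℕ) = l
    · right
      refine ⟨hpq.1, hpq.2, ?_⟩
      congr 1 <;> apply Fin.ext <;> simp <;> omega
    · left
      rw [Fin.lt_def] at h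
      simp only [Equiv.swap_apply_def, Fin.ext_iff]
      split_ifs <;> rw [Fin.lt_def] <;> simp <;> omega
  · left; simpa using h

lemma adjSwap_commute {a i : ℕ} (h : a + 2 ≤ i) :
    Commute (adjSwap a : Equiv.Perm (Fin n)) (adjSwap i) := by
  unfold adjSwap
  split_ifs
  · apply Equiv.Perm.Disjoint.commute
    intro x
    by_cases hx : (x : ℕ) < i - 1
    · right
      apply Equiv.swap_apply_of_ne_of_ne <;> simp [Fin.ext_iff] <;> omega
    · left
      apply Equiv.swap_apply_of_ne_of_ne <;> simp [Fin.ext_iff] <;> omega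
  all_goals simp [Commute]

/-- The inversion set of a permutation. -/
def invSet (u : Equiv.Perm (Fin n)) : Finset (Fin n × Fin n) :=
  (Finset.univ : Finset (Fin n × Fin n)).filter (fun p => p.1 < p.2 ∧ u p.2 < u p.1)

/-- Away from the pair `(l, l + 1)`, the map `s_l × s_l` carries inversions of `u` to
inversions of `u * s_l`. -/
lemma card_invSet_le (u : Equiv.Perm (Fin n)) (l : ℕ) :
    ((invSet u).filter (fun p => ¬ ((p.1 : ℕ) + 1 = l ∧ (p.2 : ℕ) = l))).card
      ≤ invCount (u * adjSwap l) := by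
  apply Finset.card_le_card_of_injOn
    (fun p => ((adjSwap l : Equiv.Perm (Fin n)) p.1, (adjSwap l : Equiv.Perm (Fin n)) p.2))
  · rintro ⟨p, q⟩ hp
    simp only [invSet, Finset.coe_filter, Finset.mem_filter, Finset.mem_univ, true_and,
      Set.mem_ofPred_eq] at hp
    rcases adjSwap_lt_or_eq l hp.1.1 with h | h
    · refine Finset.mem_filter.2 ⟨Finset.mem_univ _, h, ?_⟩
      simpa only [Equiv.Perm.mul_apply, adjSwap_apply_self] using hp.1.2
    · exact absurd ⟨h.1, h.2.1⟩ hp.2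
  · rintro ⟨p, q⟩ - ⟨p', q'⟩ - h
    simpa using h

lemma invCount_le_mul_adjSwap (u : Equiv.Perm (Fin n)) (l : ℕ) :
    invCount u ≤ invCount (u * adjSwap l) + 1 := by
  have h1 := card_invSet_le u l
  have h2 : ((invSet u).filter (fun p => (p.1 : ℕ) + 1 = l ∧ (p.2 : ℕ) = l)).card ≤ 1 := by
    rw [Finset.card_le_one]
    rintro ⟨a, b⟩ ha ⟨c, d⟩ hc
    simp only [Finset.mem_filter] at ha hc
    simp only [Prod.mk.injEq, Fin.ext_iff]
    omega
  have h3 := Finset.card_filter_add_card_filter_not (s := invSet u)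
    (fun p => (p.1 : ℕ) + 1 = l ∧ (p.2 : ℕ) = l)
  change (invSet u).card ≤ _
  omega

lemma invCount_mul_adjSwap_le (u : Equiv.Perm (Fin n)) (l : ℕ) :
    invCount (u * adjSwap l) ≤ invCount u + 1 := by
  have h := invCount_le_mul_adjSwap (u * adjSwap l) l
  rwa [mul_assoc, adjSwap_mul_self, mul_one] at h

/-- If `ℓ(x s_l) < ℓ(x)`, then `s_l = (p q)` for an inverted pair `p < q` of `x`. -/
lemma exists_descent {x : Equiv.Perm (Fin n)} {l : ℕ}
    (h : invCount (x * adjSwap l) < invCount x) :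
    ∃ p q : Fin n, p < q ∧ x q < x p ∧ adjSwap l = Equiv.swap p q := by
  have h1 := card_invSet_le x l
  have h3 := Finset.card_filter_add_card_filter_not (s := invSet x)
    (fun p => (p.1 : ℕ) + 1 = l ∧ (p.2 : ℕ) = l)
  change _ < (invSet x).card at h
  have h2 : 0 < ((invSet x).filter (fun p => (p.1 : ℕ) + 1 = l ∧ (p.2 : ℕ) = l)).card := by
    omega
  obtain ⟨⟨p, q⟩, hpq⟩ := Finset.card_pos.1 h2
  simp only [invSet, Finset.mem_filter, Finset.mem_univ, true_and] at hpq
  refine ⟨p, q, hpq.1.1, hpq.1.2, ?_⟩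
  rcases adjSwap_lt_or_eq l hpq.1.1 with h' | h'
  · exfalso
    have hl : 1 ≤ l ∧ l < n := by have := q.2; omega
    have e1 : p = ⟨l - 1, by omega⟩ := Fin.ext (by simp; omega)
    have e2 : q = ⟨l, hl.2⟩ := Fin.ext (by simp; omega)
    rw [adjSwap, dif_pos hl, ← e1, ← e2, Equiv.swap_apply_left, Equiv.swap_apply_right] at h'
    exact absurd h' (not_lt.2 hpq.1.1.le)
  · exact h'.2.2

lemma invCount_one : invCount (1 : Equiv.Perm (Fin n)) = 0 := by
  simp only [invCount, Finset.card_eq_zero, Finset.filter_eq_empty_iff]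
  rintro ⟨p, q⟩ - ⟨h1, h2⟩
  exact absurd h1 (not_lt.2 (le_of_lt h2))

/-- Left multiplication by `w₀` complements the inversion set. -/
lemma invCount_longest_mul (u : Equiv.Perm (Fin n)) :
    invCount u + invCount (longest * u)
      = ((Finset.univ : Finset (Fin n × Fin n)).filter (fun p => p.1 < p.2)).card := by
  rw [← Finset.card_filter_add_card_filter_not
    (s := (Finset.univ : Finset (Fin n × Fin n)).filter (fun p => p.1 < p.2))
    (fun p => u p.2 < u p.1)]
  unfold invCount
  rw [Finset.filter_filter, Finset.filter_filter]
  congr 2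
  apply Finset.filter_congr
  rintro ⟨p, q⟩ -
  have hl : ∀ t : Fin n, (longest : Equiv.Perm (Fin n)) t = Fin.rev t := fun _ => rfl
  simp only [Equiv.Perm.mul_apply, hl, Fin.rev_lt_rev]
  refine and_congr_right fun h => ?_
  have : u p ≠ u q := fun e => absurd (u.injective e) h.ne
  rw [not_lt]
  exact ⟨le_of_lt, fun h => lt_of_le_of_ne h this⟩

/-! ### Words, Demazure products and the exchange property -/

/-- The ordinary group product of the adjacent transpositions `s_{g b}`, `b` running
through `L`. -/
def wordProd (n : ℕ) {α : Type} (g : α → ℕ) (L : List α) : Equiv.Perm (Fin n) :=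
  (L.map (fun b => (adjSwap (g b) : Equiv.Perm (Fin n)))).prod

lemma wordProd_append {α : Type} (g : α → ℕ) (L M : List α) :
    wordProd n g (L ++ M) = wordProd n g L * wordProd n g M := by
  simp [wordProd]

lemma wordProd_cons {α : Type} (g : α → ℕ) (b : α) (M : List α) :
    wordProd n g (b :: M) = adjSwap (g b) * wordProd n g M := by
  simp [wordProd]

lemma wordProd_concat {α : Type} (g : α → ℕ) (L : List α) (b : α) :
    wordProd n g (L ++ [b]) = wordProd n g L * adjSwap (g b) := by
  simp [wordProd]

lemma invCount_wordProd_le {α : Type} (g : α → ℕ) (L : List α) :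
    invCount (wordProd n g L) ≤ L.length := by
  induction L using List.reverseRecOn with
  | nil => simp [wordProd, invCount_one]
  | append_singleton L b ih =>
    rw [wordProd_concat]
    have := invCount_mul_adjSwap_le (wordProd n g L) (g b)
    simp only [List.length_append, List.length_singleton]
    omega

lemma invCount_demazure_le (v : Equiv.Perm (Fin n)) (L : List (ℕ × ℕ)) :
    invCount (L.foldl (demStep v) 1) ≤ L.length := by
  induction L using List.reverseRecOn with
  | nil => simp [invCount_one]
  | append_singleton L b ih =>
    have := invCount_mul_adjSwap_le (L.foldl (demStep v) 1) (canonLabel v b)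
    simp only [List.foldl_append, List.foldl_cons, List.foldl_nil, List.length_append,
      List.length_singleton]
    rw [demStep]
    split_ifs <;> omega

lemma demazure_eq_wordProd_of_length (v : Equiv.Perm (Fin n)) (L : List (ℕ × ℕ))
    (h : invCount (L.foldl (demStep v) 1) = L.length) :
    L.foldl (demStep v) 1 = wordProd n (canonLabel v) L := by
  induction L using List.reverseRecOn with
  | nil => simp [wordProd]
  | append_singleton L b ih =>
    have h1 := invCount_mul_adjSwap_le (L.foldl (demStep v) 1) (canonLabel v b)
    have h2 := invCount_demazure_le v L
    simp only [List.foldl_append, List.foldl_cons, List.foldl_nil, List.length_append,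
      List.length_singleton] at h ⊢
    rw [demStep] at h ⊢
    rw [wordProd_concat]
    split_ifs at h ⊢ with hc
    · rw [ih (by omega)]
    · omega

lemma demazure_eq_wordProd_of_reduced (v : Equiv.Perm (Fin n)) (L : List (ℕ × ℕ))
    (h : invCount (wordProd n (canonLabel v) L) = L.length) :
    L.foldl (demStep v) 1 = wordProd n (canonLabel v) L := by
  induction L using List.reverseRecOn with
  | nil => simp [wordProd]
  | append_singleton L b ih =>
    rw [wordProd_concat] at h ⊢
    have h1 := invCount_mul_adjSwap_le (wordProd n (canonLabel v) L) (canonLabel v b)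
    have h2 := invCount_wordProd_le (n := n) (canonLabel v) L
    simp only [List.foldl_append, List.foldl_cons, List.foldl_nil, List.length_append,
      List.length_singleton] at h ⊢
    rw [ih (by omega), demStep, if_pos (by omega)]

/-- Strong exchange property: right multiplication by a transposition of an inverted pair of
positions amounts to deleting one letter of the word (which need not be reduced).  The pair
is pushed leftwards through the word until a letter swaps it. -/
lemma exchange {α : Type} (g : α → ℕ) (L : List α) (p q : Fin n) (hpq : p < q)
    (h : wordProd n g L q < wordProd n g L p) :
    ∃ A b B, L = A ++ b :: B ∧ wordProd n g (A ++ B) = wordProd n g L * Equiv.swap p q := by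
  induction L using List.reverseRecOn generalizing p q with
  | nil =>
    simp only [wordProd, List.map_nil, List.prod_nil, Equiv.Perm.one_apply] at h
    exact absurd h (not_lt.2 hpq.le)
  | append_singleton L b ih =>
    rw [wordProd_concat] at h ⊢
    rcases adjSwap_lt_or_eq (g b) hpq with hlt | ⟨-, -, heq⟩
    · obtain ⟨A, c, B, rfl, hAB⟩ := ih _ _ hlt h
      refine ⟨A, c, B ++ [b], by simp, ?_⟩
      rw [← List.append_assoc, wordProd_concat, hAB, mul_assoc, mul_assoc]
      congr 1
      rw [Equiv.swap_apply_apply, inv_mul_cancel_right]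
    · exact ⟨L, b, [], rfl, by
        rw [heq, mul_assoc, Equiv.swap_mul_self]; simp⟩

/-! ### The reading order -/

/-- The strict reading order on boxes: higher rows first, left to right in a row. -/
def readLT (b c : ℕ × ℕ) : Prop := c.1 < b.1 ∨ (b.1 = c.1 ∧ b.2 < c.2)

instance : Std.Asymm readLT := ⟨fun b c h h' => by unfold readLT at h h'; omega⟩

lemma mem_readingList {P : Finset (ℕ × ℕ)} {b : ℕ × ℕ} :
    b ∈ readingList n P ↔ b.1 < n ∧ b.2 < n ∧ b ∈ P := by
  obtain ⟨r, j⟩ := b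
  simp [readingList]

lemma pairwise_readingList (n : ℕ) (P : Finset (ℕ × ℕ)) :
    (readingList n P).Pairwise readLT := by
  unfold readingList
  rw [List.pairwise_flatMap]
  constructor
  · intro r _
    rw [List.pairwise_map]
    refine (List.Pairwise.filter _ List.pairwise_lt_range).imp ?_
    intro a b h
    exact Or.inr ⟨rfl, h⟩
  · rw [List.pairwise_reverse]
    refine List.pairwise_lt_range.imp ?_
    intro a b h x hx y hy
    simp only [List.mem_map] at hx hy
    obtain ⟨_, -, rfl⟩ := hx
    obtain ⟨_, -, rfl⟩ := hy
    exact Or.inl h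

lemma nodup_of_pairwise_readLT {L : List (ℕ × ℕ)} (h : L.Pairwise readLT) : L.Nodup :=
  h.imp fun {a b} hab e => by subst e; unfold readLT at hab; omega

lemma eq_of_pairwise_readLT {L M : List (ℕ × ℕ)} (hL : L.Pairwise readLT)
    (hM : M.Pairwise readLT) (h : ∀ b, b ∈ L ↔ b ∈ M) : L = M :=
  List.Perm.eq_of_pairwise (fun _ _ _ _ h1 h2 => absurd h2 (Std.Asymm.asymm _ _ h1)) hL hM
    ((List.perm_ext_iff_of_nodup (nodup_of_pairwise_readLT hL)
      (nodup_of_pairwise_readLT hM)).2 h)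

lemma length_readingList {P : Finset (ℕ × ℕ)} (h : ∀ b ∈ P, b.1 < n ∧ b.2 < n) :
    (readingList n P).length = P.card := by
  rw [← List.toFinset_card_of_nodup (nodup_of_pairwise_readLT (pairwise_readingList n P))]
  congr 1
  ext b
  simp only [List.mem_toFinset, mem_readingList]
  exact ⟨fun hb => hb.2.2, fun hb => ⟨(h b hb).1, (h b hb).2, hb⟩⟩

lemma readingList_erase {P : Finset (ℕ × ℕ)} {A B : List (ℕ × ℕ)} {b : ℕ × ℕ}
    (h : readingList n P = A ++ b :: B) : readingList n (P.erase b) = A ++ B := by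
  have hp := pairwise_readingList n P
  have hnd := nodup_of_pairwise_readLT hp
  have hm : ∀ c, c ∈ readingList n P ↔ _ := fun c => mem_readingList
  rw [h] at hp hnd hm
  refine eq_of_pairwise_readLT (pairwise_readingList n _) (hp.sublist ?_) ?_
  · exact List.Sublist.append_left (List.sublist_cons_self _ _) _
  · intro c
    rw [List.nodup_middle, List.nodup_cons] at hnd
    have := hm c
    rw [mem_readingList, Finset.mem_erase]
    simp only [List.mem_append, List.mem_cons] at this hnd ⊢
    by_cases hc : c = b
    · subst hc
      simp only [ne_eq, not_true_eq_false, false_and, and_false, false_iff]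
      exact hnd.1
    · simp only [hc, false_or] at this
      simp only [ne_eq, hc, not_false_eq_true, true_and]
      exact this.symm

/-! ### Reduced pipe dreams -/

/-- For reduced pipe dreams the Demazure product is the ordinary product. -/
lemma mem_RedPipes {v x : Equiv.Perm (Fin n)} {P : Finset (ℕ × ℕ)} :
    P ∈ RedPipes v x ↔ P ⊆ Rothe v ∧
      wordProd n (canonLabel v) (readingList n P) = x ∧ P.card = invCount x := by
  simp only [RedPipes, Pipes, Finset.mem_filter, Finset.mem_powerset, and_assoc]
  refine and_congr_right fun hP => and_congr_left fun hc => ?_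
  have hlen : (readingList n P).length = P.card := by
    apply length_readingList
    intro b hb
    have := hP hb
    simp only [Rothe, Finset.mem_filter, Finset.mem_product, Finset.mem_range] at this
    exact this.1
  unfold demazure
  constructor
  · intro h
    rw [← demazure_eq_wordProd_of_length, h]
    rw [h]; omega
  · intro h
    rw [demazure_eq_wordProd_of_reduced, h]
    rw [h]; omega

lemma isFace_sdiff {v w : Equiv.Perm (Fin n)} {S : Finset (ℕ × ℕ)} (hS : S ⊆ Rothe v) :
    IsFace v w (Rothe v \ S) ↔ ∃ R ⊆ S, R ∈ RedPipes v (longest * w) := by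
  unfold IsFace
  rw [Finset.sdiff_sdiff_eq_self hS]
  simp only [Finset.sdiff_subset, true_and]
  exact ⟨fun ⟨R, h1, h2⟩ => ⟨R, h2, h1⟩, fun ⟨R, h1, h2⟩ => ⟨R, h2, h1⟩⟩

/-! ### The diagrams of `v` and `v s_i` at the last ascent -/

lemma permVal_lt (v : Equiv.Perm (Fin n)) {j : ℕ} (h : j < n) : permVal v j < n := by
  simp [permVal, h]

lemma permVal_inj (v : Equiv.Perm (Fin n)) {j k : ℕ} (hj : j < n) (hk : k < n)
    (h : permVal v j = permVal v k) : j = k := by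
  simp only [permVal, hj, hk, dif_pos] at h
  simpa using v.injective (Fin.ext h)

lemma permVal_permVal_symm (v : Equiv.Perm (Fin n)) (j : ℕ) :
    permVal v (permVal v.symm j) = j := by
  by_cases h : j < n <;> simp [permVal, h]

lemma permVal_symm_permVal (v : Equiv.Perm (Fin n)) (j : ℕ) :
    permVal v.symm (permVal v j) = j := by
  by_cases h : j < n <;> simp [permVal, h]

lemma permVal_mul_adjSwap (v : Equiv.Perm (Fin n)) {i : ℕ} (h1 : 1 ≤ i) (h2 : i < n) (j : ℕ) :
    permVal (v * adjSwap i) j =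
      permVal v (if j = i - 1 then i else if j = i then i - 1 else j) := by
  unfold adjSwap
  rw [dif_pos ⟨h1, h2⟩]
  by_cases hj : j < n
  · simp only [permVal, hj, dif_pos, Equiv.Perm.mul_apply, Equiv.swap_apply_def, Fin.ext_iff]
    have e : (i - 1 < n) := by omega
    split_ifs <;> simp_all
  · have e1 : j ≠ i - 1 := by omega
    have e2 : j ≠ i := by omega
    simp [permVal, hj, e1, e2]

/-- The boxes of `D(v)` are the non-inversions `j < k`, `v(j) < v(k)`, placed in column `j`
and in the row of the value `v(k)`. -/
lemma mem_Rothe {v : Equiv.Perm (Fin n)} {b : ℕ × ℕ} :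
    b ∈ Rothe v ↔ ∃ k < n, b.2 < k ∧ permVal v b.2 < permVal v k ∧
      b.1 + permVal v k + 1 = n := by
  obtain ⟨r, j⟩ := b
  simp only [Rothe, Finset.mem_filter, Finset.mem_product, Finset.mem_range]
  constructor
  · rintro ⟨⟨h1, h2⟩, h3, h4⟩
    have hk := permVal_permVal_symm v (n - 1 - r)
    exact ⟨_, permVal_lt v.symm (by omega), h4, by omega, by omega⟩
  · rintro ⟨k, h1, h2, h3, h4⟩
    have hk := permVal_symm_permVal v k
    have : n - 1 - r = permVal v k := by omega
    rw [this, hk]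
    omega

/-- The label of a box counts the columns up to it that meet its row. -/
lemma canonLabel_eq {v : Equiv.Perm (Fin n)} {b : ℕ × ℕ} :
    canonLabel v b = b.1 + ((Finset.range n).filter
      (fun t => t ≤ b.2 ∧ (b.1, t) ∈ Rothe v)).card := by
  unfold canonLabel
  congr 1
  symm
  apply Finset.card_bij (fun t _ => (b.1, t))
  · intro t ht
    simp only [Finset.mem_filter] at ht ⊢
    exact ⟨ht.2.2, trivial, ht.2.1⟩
  · intro s _ t _ h
    exact (Prod.mk.inj h).2
  · rintro ⟨r, t⟩ ht
    simp only [Finset.mem_filter] at ht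
    obtain ⟨h1, rfl, h3⟩ := ht
    refine ⟨t, ?_, rfl⟩
    simp only [Finset.mem_filter, Finset.mem_range]
    obtain ⟨k, hk, hk', -⟩ := mem_Rothe.1 h1
    exact ⟨by simp only at hk'; omega, h3, h1⟩

lemma card_permVal_lt (v : Equiv.Perm (Fin n)) {y : ℕ} (hy : y ≤ n) :
    ((Finset.range n).filter (fun t => permVal v t < y)).card = y := by
  conv_rhs => rw [← Finset.card_range y]
  apply Finset.card_bij (fun t _ => permVal v t)
  · intro t ht
    simpa using (Finset.mem_filter.1 ht).2
  · intro s hs t ht h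
    simp only [Finset.mem_filter, Finset.mem_range] at hs ht
    exact permVal_inj v hs.1 ht.1 h
  · intro b hb
    rw [Finset.mem_range] at hb
    refine ⟨permVal v.symm b, ?_, permVal_permVal_symm v b⟩
    simp only [Finset.mem_filter, Finset.mem_range, permVal_permVal_symm]
    exact ⟨permVal_lt _ (by omega), hb⟩

/-- The values of `v` decrease strictly after its last ascent `i`. -/
lemma IsLastAscent.lt_of_lt {v : Equiv.Perm (Fin n)} {i : ℕ} (hi : IsLastAscent v i) {k : ℕ}
    (hk : i < k) (hkn : k < n) : permVal v k < permVal v i := by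
  obtain ⟨-, hin, -, h4⟩ := hi
  induction k, hk using Nat.le_induction with
  | base =>
    have h := h4 (i + 1) (by omega) hkn
    have := fun e => permVal_inj v hin hkn e
    simp only [Nat.add_sub_cancel] at h
    grind
  | succ k hk ih =>
    have h := h4 (k + 1) (by omega) hkn
    have := fun e => permVal_inj v (by omega : k < n) hkn e
    simp only [Nat.add_sub_cancel] at h
    grind

/-- The shift underlying `φ`: boxes of (1-based) column `i` move one step to the right. -/
def boxShift (i : ℕ) (b : ℕ × ℕ) : ℕ × ℕ := if b.2 = i - 1 then (b.1, b.2 + 1) else b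

lemma phiMap_eq (v : Equiv.Perm (Fin n)) (i : ℕ) (P : Finset (ℕ × ℕ)) :
    phiMap v i P = (P.erase (zlastBox v i)).image (boxShift i) := by
  ext ⟨r, j⟩
  simp only [phiMap, zlastBox, boxShift, Finset.mem_union, Finset.mem_filter, Finset.mem_image,
    Finset.mem_erase, Prod.exists, ne_eq, Prod.mk.injEq]
  constructor
  · rintro (⟨h1, h2⟩ | ⟨a, b, ⟨h1, h2, h3⟩, h4, h5⟩)
    · exact ⟨r, j, ⟨by tauto, h1⟩, by simp [h2]⟩
    · exact ⟨a, b, ⟨by tauto, h1⟩, by simp [h2]; omega⟩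
  · rintro ⟨a, b, ⟨h1, h2⟩, h3⟩
    by_cases hb : b = i - 1
    · simp only [hb, if_true, Prod.mk.injEq] at h3
      right
      exact ⟨a, b, ⟨h2, hb, by tauto⟩, by omega, by omega⟩
    · simp only [hb, if_false, Prod.mk.injEq] at h3
      obtain ⟨rfl, rfl⟩ := h3
      exact Or.inl ⟨h2, hb⟩

section LastAscent

variable {v : Equiv.Perm (Fin n)} {i : ℕ}

lemma zlastBox_mem (hi : IsLastAscent v i) : zlastBox v i ∈ Rothe v := by
  obtain ⟨h1, h2, h3, -⟩ := hi
  have := permVal_lt v h2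
  rw [mem_Rothe]
  exact ⟨i, h2, by simp [zlastBox]; omega, by simpa [zlastBox] using h3,
    by simp [zlastBox]; omega⟩

lemma col_ne_of_mem (hi : IsLastAscent v i) {b : ℕ × ℕ} (hb : b ∈ Rothe v) : b.2 ≠ i := by
  rintro rfl
  obtain ⟨k, h1, h2, h3, -⟩ := mem_Rothe.1 hb
  exact absurd (hi.lt_of_lt h2 h1) (by omega)

lemma boxShift_readLT (hi : IsLastAscent v i) {b c : ℕ × ℕ} (hb : b ∈ Rothe v)
    (hc : c ∈ Rothe v) (h : readLT b c) : readLT (boxShift i b) (boxShift i c) := by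
  have h1 := col_ne_of_mem hi hb
  have h2 := col_ne_of_mem hi hc
  have h3 := hi.1
  unfold readLT boxShift at *
  split_ifs <;> omega

lemma boxShift_injOn (hi : IsLastAscent v i) : Set.InjOn (boxShift i) (Rothe v : Set (ℕ × ℕ)) := by
  rintro ⟨r, j⟩ hb ⟨r', j'⟩ hc h
  have h1 := col_ne_of_mem hi hb
  have h2 := col_ne_of_mem hi hc
  have h3 := hi.1
  unfold boxShift at h
  simp only at h1 h2 h
  split_ifs at h <;> simp only [Prod.mk.injEq] at h ⊢ <;> omega

/-- `D(v s_i)` is `D(v)` with `z_last` removed and column `i` moved to column `i + 1`. -/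
lemma Rothe_mul_adjSwap (hi : IsLastAscent v i) :
    Rothe (v * adjSwap i) = ((Rothe v).erase (zlastBox v i)).image (boxShift i) := by
  obtain ⟨h1, h2, h3, -⟩ := id hi
  have hV := permVal_lt v h2
  have hinj := fun {j k : ℕ} => @permVal_inj n v j k
  have hdec := fun {k : ℕ} => @IsLastAscent.lt_of_lt n v i hi k
  ext ⟨r, j⟩
  simp only [Finset.mem_image, Finset.mem_erase, mem_Rothe, permVal_mul_adjSwap v h1 h2]
  constructor
  · rintro ⟨k, hk, hjk, hlt, hr⟩
    by_cases hj1 : j = i - 1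
    · exfalso
      rw [if_pos hj1] at hlt
      by_cases hki : k = i
      · rw [if_neg (by omega), if_pos hki] at hlt; omega
      · rw [if_neg (by omega), if_neg hki] at hlt
        have := hdec (k := k) (by omega) hk
        omega
    · rw [if_neg hj1] at hlt
      by_cases hj2 : j = i
      · rw [if_pos hj2, if_neg (by omega), if_neg (by omega)] at hlt
        rw [if_neg (by omega), if_neg (by omega)] at hr
        refine ⟨(r, i - 1), ⟨?_, k, hk, by simp only; omega, hlt, hr⟩, ?_⟩
        · have := hdec (k := k) (by omega) hk
          simp only [zlastBox, ne_eq, Prod.mk.injEq, and_true]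
          omega
        · simp only [boxShift, if_true, Prod.mk.injEq, true_and]; omega
      · rw [if_neg hj2] at hlt
        refine ⟨(r, j), ⟨?_, _, ?_, ?_, hlt, hr⟩, ?_⟩
        · simp [zlastBox, hj1]
        · split_ifs <;> omega
        · simp only at hjk ⊢
          split_ifs <;> omega
        · simp [boxShift, hj1]
  · rintro ⟨⟨r', j'⟩, ⟨hz, k, hk, hjk, hlt, hr⟩, heq⟩
    simp only at hjk hlt hr
    unfold boxShift at heq
    by_cases hj1 : j' = i - 1
    · simp only [hj1, if_true, Prod.mk.injEq] at heq
      obtain ⟨rfl, rfl⟩ := heq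
      subst hj1
      have hki : k ≠ i := by
        rintro rfl
        apply hz
        simp only [zlastBox, Prod.mk.injEq, and_true]
        omega
      refine ⟨k, hk, by omega, ?_⟩
      rw [if_neg (by omega), if_pos (by omega), if_neg (by omega), if_neg hki]
      exact ⟨hlt, hr⟩
    · simp only [hj1, if_false, Prod.mk.injEq] at heq
      obtain ⟨rfl, rfl⟩ := heq
      have hj2 : j' ≠ i := by
        rintro rfl
        have := hdec (k := k) (by omega) hk
        omega
      refine ⟨if k = i - 1 then i else if k = i then i - 1 else k, ?_, ?_, ?_⟩
      · split_ifs <;> omega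
      · split_ifs <;> omega
      · have e : ∀ k : ℕ, (if (if k = i - 1 then i else if k = i then i - 1 else k) = i - 1 then i
            else if (if k = i - 1 then i else if k = i then i - 1 else k) = i then i - 1
            else (if k = i - 1 then i else if k = i then i - 1 else k)) = k := by
          intro k; split_ifs <;> omega
        simp only [e, hj1, hj2, if_false]
        exact ⟨hlt, hr⟩

/-- The box `z_last` is the last one in its row. -/
lemma col_le_of_row_eq (hi : IsLastAscent v i) {b : ℕ × ℕ} (hb : b ∈ Rothe v)
    (h : b.1 = (zlastBox v i).1) : b.2 ≤ i - 1 := by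
  obtain ⟨k, h1, h2, h3, h4⟩ := mem_Rothe.1 hb
  have := permVal_lt v hi.2.1
  simp only [zlastBox] at h
  have := permVal_inj v h1 hi.2.1 (by omega)
  omega

/-- The shift preserves labels, since `z_last` is the last box of its row. -/
lemma canonLabel_boxShift (hi : IsLastAscent v i) {b : ℕ × ℕ} (hb : b ∈ Rothe v)
    (hbz : b ≠ zlastBox v i) :
    canonLabel (v * adjSwap i) (boxShift i b) = canonLabel v b := by
  have hrow : ∀ c : ℕ × ℕ, (boxShift i c).1 = c.1 := by
    intro c; unfold boxShift; split_ifs <;> rfl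
  unfold canonLabel
  rw [hrow]
  congr 1
  have hset : (Rothe (v * adjSwap i)).filter
      (fun c => c.1 = b.1 ∧ c.2 ≤ (boxShift i b).2) =
      ((Rothe v).filter (fun c => c.1 = b.1 ∧ c.2 ≤ b.2)).image (boxShift i) := by
    rw [Rothe_mul_adjSwap hi]
    have key : ∀ c ∈ Rothe v, ((boxShift i c).2 ≤ (boxShift i b).2 ↔ c.2 ≤ b.2) := by
      intro c hc
      have h1 := col_ne_of_mem hi hb
      have h2 := col_ne_of_mem hi hc
      have h3 := hi.1
      unfold boxShift
      split_ifs <;> simp only <;> omega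
    ext d
    simp only [Finset.mem_filter, Finset.mem_image, Finset.mem_erase]
    constructor
    · rintro ⟨⟨c, ⟨-, hc⟩, rfl⟩, h1, h2⟩
      exact ⟨c, ⟨hc, by rwa [hrow] at h1, (key c hc).1 h2⟩, rfl⟩
    · rintro ⟨c, ⟨hc, h1, h2⟩, rfl⟩
      refine ⟨⟨c, ⟨?_, hc⟩, rfl⟩, by rw [hrow, h1], (key c hc).2 h2⟩
      rintro rfl
      apply hbz
      have h3 := col_le_of_row_eq hi hb h1.symm
      apply Prod.ext h1.symm
      simp only [zlastBox] at h2 ⊢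
      omega
  rw [hset, Finset.card_image_of_injOn]
  exact (boxShift_injOn hi).mono (by exact_mod_cast Finset.filter_subset _ _)

/-- The label of `z_last` is `i`: among the `v(i+1) - 1` positions with value below `v(i+1)`,
exactly the `n - i - 1` ones after `i + 1` do not give a box in the row of `z_last`. -/
lemma canonLabel_zlastBox (hi : IsLastAscent v i) : canonLabel v (zlastBox v i) = i := by
  obtain ⟨h1, h2, h3, -⟩ := id hi
  have hV := permVal_lt v h2
  rw [canonLabel_eq]
  have hsplit := Finset.card_filter_add_card_filter_not
    (s := (Finset.range n).filter (fun t => permVal v t < permVal v i)) (fun t => t < i)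
  rw [card_permVal_lt v hV.le, Finset.filter_filter, Finset.filter_filter] at hsplit
  have e1 : (Finset.range n).filter
      (fun t => t ≤ (zlastBox v i).2 ∧ ((zlastBox v i).1, t) ∈ Rothe v) =
      (Finset.range n).filter (fun t => permVal v t < permVal v i ∧ t < i) := by
    apply Finset.filter_congr
    intro t ht
    simp only [zlastBox, mem_Rothe]
    constructor
    · rintro ⟨ht', k, hk, htk, hlt, hr⟩
      have := permVal_inj v hk h2 (by omega)
      subst this
      exact ⟨hlt, htk⟩
    · rintro ⟨hlt, hti⟩
      exact ⟨by omega, i, h2, hti, hlt, by omega⟩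
  have e2 : (Finset.range n).filter (fun t => permVal v t < permVal v i ∧ ¬ t < i) =
      Finset.Ico (i + 1) n := by
    ext t
    simp only [Finset.mem_filter, Finset.mem_range, Finset.mem_Ico]
    constructor
    · rintro ⟨ht, hlt, hti⟩
      have : t ≠ i := by rintro rfl; omega
      omega
    · rintro ⟨ht, htn⟩
      exact ⟨htn, hi.lt_of_lt (by omega) htn, by omega⟩
  rw [e2, Nat.card_Ico] at hsplit
  rw [e1]
  simp only [zlastBox]
  omega

/-- Boxes read after `z_last` have labels at most `i - 2`: they lie in the row of a value
exceeding `v(i+1)`, whose position is before `i`, so that all positions from `i` on carry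
smaller values without contributing to the label. -/
lemma canonLabel_of_after (hi : IsLastAscent v i) {b : ℕ × ℕ} (hb : b ∈ Rothe v)
    (h : readLT (zlastBox v i) b) : canonLabel v b + 2 ≤ i := by
  obtain ⟨h1, h2, h3, -⟩ := id hi
  have hV := permVal_lt v h2
  have hrow : b.1 < (zlastBox v i).1 := by
    rcases h with h | ⟨h, h'⟩
    · exact h
    · have := col_le_of_row_eq hi hb h.symm
      simp only [zlastBox] at h'
      omega
  obtain ⟨k, hk, hbk, hlt, hr⟩ := mem_Rothe.1 hb
  simp only [zlastBox] at hrow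
  have hki : k < i - 1 := by
    by_contra hcon
    rcases lt_trichotomy k i with h' | h' | h'
    · have : k = i - 1 := by omega
      subst this; omega
    · subst h'; omega
    · have := hi.lt_of_lt h' hk; omega
  have hsplit := Finset.card_filter_add_card_filter_not
    (s := (Finset.range n).filter (fun t => permVal v t < permVal v k)) (fun t => t < i - 1)
  rw [card_permVal_lt v (permVal_lt v hk).le, Finset.filter_filter, Finset.filter_filter]
    at hsplit
  have e1 : ((Finset.range n).filter (fun t => t ≤ b.2 ∧ (b.1, t) ∈ Rothe v)).card ≤
      ((Finset.range n).filter (fun t => permVal v t < permVal v k ∧ t < i - 1)).card := by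
    apply Finset.card_le_card
    intro t
    simp only [Finset.mem_filter, mem_Rothe]
    rintro ⟨ht, ht', k', hk', -, hlt', hr'⟩
    exact ⟨ht, by omega, by omega⟩
  have e2 : (Finset.range n).filter (fun t => permVal v t < permVal v k ∧ ¬ t < i - 1) =
      Finset.Ico (i - 1) n := by
    ext t
    simp only [Finset.mem_filter, Finset.mem_range, Finset.mem_Ico]
    constructor
    · rintro ⟨ht, hlt, hti⟩
      omega
    · rintro ⟨ht, htn⟩
      refine ⟨htn, ?_, by omega⟩
      rcases lt_trichotomy t i with h' | h' | h'
      · have : t = i - 1 := by omega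
        subst this; omega
      · subst h'; omega
      · have := hi.lt_of_lt h' htn; omega
  rw [e2, Nat.card_Ico] at hsplit
  rw [canonLabel_eq]
  omega

/-! ### Transfer of reduced pipe dreams -/

lemma wordProd_image_boxShift (hi : IsLastAscent v i) {R : Finset (ℕ × ℕ)}
    (hR : R ⊆ (Rothe v).erase (zlastBox v i)) :
    wordProd n (canonLabel (v * adjSwap i)) (readingList n (R.image (boxShift i))) =
      wordProd n (canonLabel v) (readingList n R) := by
  have hR' : ∀ b ∈ R, b ≠ zlastBox v i ∧ b ∈ Rothe v := fun b hb => Finset.mem_erase.1 (hR hb)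
  have hbd : ∀ u : Equiv.Perm (Fin n), ∀ b ∈ Rothe u, b.1 < n ∧ b.2 < n := by
    intro u b hb
    obtain ⟨k, h1, h2, -, h4⟩ := mem_Rothe.1 hb
    omega
  have hlist : readingList n (R.image (boxShift i)) = (readingList n R).map (boxShift i) := by
    apply eq_of_pairwise_readLT (pairwise_readingList n _)
    · rw [List.pairwise_map]
      refine (pairwise_readingList n R).imp_of_mem ?_
      intro b c hb hc
      exact boxShift_readLT hi (hR' b (mem_readingList.1 hb).2.2).2
        (hR' c (mem_readingList.1 hc).2.2).2
    · intro b
      simp only [mem_readingList, List.mem_map, Finset.mem_image]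
      constructor
      · rintro ⟨-, -, c, hc, rfl⟩
        have := hbd v c (hR' c hc).2
        exact ⟨c, ⟨this.1, this.2, hc⟩, rfl⟩
      · rintro ⟨c, ⟨-, -, hc⟩, rfl⟩
        have : boxShift i c ∈ Rothe (v * adjSwap i) := by
          rw [Rothe_mul_adjSwap hi]
          exact Finset.mem_image_of_mem _ (hR hc)
        have := hbd _ _ this
        exact ⟨this.1, this.2, c, hc, rfl⟩
  unfold wordProd
  rw [hlist, List.map_map]
  congr 1
  apply List.map_congr_left
  intro b hb
  have := hR' b (mem_readingList.1 hb).2.2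
  simp only [Function.comp_apply, canonLabel_boxShift hi this.2 this.1]

lemma image_mem_RedPipes (hi : IsLastAscent v i) {R : Finset (ℕ × ℕ)}
    (hR : R ⊆ (Rothe v).erase (zlastBox v i)) (x : Equiv.Perm (Fin n)) :
    R.image (boxShift i) ∈ RedPipes (v * adjSwap i) x ↔ R ∈ RedPipes v x := by
  rw [mem_RedPipes, mem_RedPipes, wordProd_image_boxShift hi hR]
  have h1 : R ⊆ Rothe v := hR.trans (Finset.erase_subset _ _)
  have h2 : R.image (boxShift i) ⊆ Rothe (v * adjSwap i) := by
    rw [Rothe_mul_adjSwap hi]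
    exact Finset.image_subset_image hR
  rw [Finset.card_image_of_injOn ((boxShift_injOn hi).mono (by exact_mod_cast h1))]
  simp only [h1, h2, true_and]

/-- The letter `s_i` of `z_last` commutes with all later letters and can be moved to the end. -/
lemma wordProd_zlast (hi : IsLastAscent v i) {R : Finset (ℕ × ℕ)} (hR : R ⊆ Rothe v)
    (hz : zlastBox v i ∈ R) :
    wordProd n (canonLabel v) (readingList n R) =
      wordProd n (canonLabel v) (readingList n (R.erase (zlastBox v i))) * adjSwap i := by
  have hmem : zlastBox v i ∈ readingList n R := by
    obtain ⟨k, h1, h2, -, h4⟩ := mem_Rothe.1 (hR hz)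
    exact mem_readingList.2 ⟨by omega, by omega, hz⟩
  obtain ⟨A, B, hAB⟩ := List.append_of_mem hmem
  rw [readingList_erase hAB, hAB, wordProd_append, wordProd_append, wordProd_cons,
    canonLabel_zlastBox hi, mul_assoc]
  congr 1
  have hp := pairwise_readingList n R
  rw [hAB, List.pairwise_append, List.pairwise_cons] at hp
  unfold wordProd
  apply Commute.eq
  apply Commute.symm
  apply Commute.list_prod_left
  intro x hx
  obtain ⟨b, hb, rfl⟩ := List.mem_map.1 hx
  have hbR : b ∈ readingList n R := by rw [hAB]; simp [hb]
  exact adjSwap_commute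
    (canonLabel_of_after hi (hR (mem_readingList.1 hbR).2.2) (hp.2.1.1 b hb))

/-- If `s_i` is a descent of `x`, a set `P` of boxes containing `z_last` contains a reduced pipe
dream for `x` exactly when `P ∖ z_last` contains one for `x s_i`. -/
lemma exists_red_iff (hi : IsLastAscent v i) {P : Finset (ℕ × ℕ)} (hP : P ⊆ Rothe v)
    (hz : zlastBox v i ∈ P) {x : Equiv.Perm (Fin n)}
    (hx : invCount (x * adjSwap i) < invCount x) :
    (∃ R ⊆ P, R ∈ RedPipes v x) ↔
      ∃ R ⊆ P.erase (zlastBox v i), R ∈ RedPipes v (x * adjSwap i) := by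
  have hlen : invCount x = invCount (x * adjSwap i) + 1 :=
    le_antisymm (invCount_le_mul_adjSwap x i) hx
  simp only [mem_RedPipes]
  constructor
  · rintro ⟨R, hRP, hR, hprod, hcard⟩
    by_cases hzR : zlastBox v i ∈ R
    · refine ⟨R.erase (zlastBox v i), Finset.erase_subset_erase _ hRP,
        (Finset.erase_subset _ _).trans hR, ?_, ?_⟩
      · rw [← hprod, wordProd_zlast hi hR hzR, mul_assoc, adjSwap_mul_self, mul_one]
      · rw [Finset.card_erase_of_mem hzR]; omega
    · obtain ⟨p, q, hpq, hinv, hs⟩ := exists_descent hx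
      rw [← hprod] at hinv
      obtain ⟨A, b, B, hAB, hdel⟩ := exchange _ _ p q hpq hinv
      have hbR : b ∈ R := by
        have : b ∈ readingList n R := by rw [hAB]; simp
        exact (mem_readingList.1 this).2.2
      refine ⟨R.erase b, ?_, (Finset.erase_subset _ _).trans hR, ?_, ?_⟩
      · intro c hc
        have hc' := Finset.mem_of_mem_erase hc
        exact Finset.mem_erase.2 ⟨fun e => hzR (e ▸ hc'), hRP hc'⟩
      · rw [readingList_erase hAB, hdel, hprod, hs]
      · rw [Finset.card_erase_of_mem hbR]; omega
  · rintro ⟨R, hRP, hR, hprod, hcard⟩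
    have hzR : zlastBox v i ∉ R := fun h => absurd (hRP h) (Finset.notMem_erase _ _)
    have hsub : insert (zlastBox v i) R ⊆ P :=
      Finset.insert_subset hz (hRP.trans (Finset.erase_subset _ _))
    refine ⟨insert (zlastBox v i) R, hsub, hsub.trans hP, ?_, ?_⟩
    · rw [wordProd_zlast hi (hsub.trans hP) (Finset.mem_insert_self _ _),
        Finset.erase_insert hzR, hprod, mul_assoc, adjSwap_mul_self, mul_one]
    · rw [Finset.card_insert_of_notMem hzR]; omega

lemma isFace_phiMap (hi : IsLastAscent v i) {P : Finset (ℕ × ℕ)} (hP : P ⊆ Rothe v)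
    (w : Equiv.Perm (Fin n)) :
    IsFace (v * adjSwap i) w (Rothe (v * adjSwap i) \ phiMap v i P) ↔
      ∃ R ⊆ P.erase (zlastBox v i), R ∈ RedPipes v (longest * w) := by
  have hP' := Finset.erase_subset_erase (zlastBox v i) hP
  rw [phiMap_eq, isFace_sdiff (by
    rw [Rothe_mul_adjSwap hi]; exact Finset.image_subset_image hP')]
  constructor
  · rintro ⟨R, hR, hred⟩
    obtain ⟨R', hR', rfl⟩ := Finset.subset_image_iff.1 hR
    have hR'' : R' ⊆ P.erase (zlastBox v i) := by exact_mod_cast hR'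
    exact ⟨R', hR'', (image_mem_RedPipes hi (hR''.trans hP') _).1 hred⟩
  · rintro ⟨R, hR, hred⟩
    exact ⟨_, Finset.image_subset_image hR, (image_mem_RedPipes hi (hR.trans hP') _).2 hred⟩

lemma phiMap_bijOn (hi : IsLastAscent v i) :
    Set.BijOn (phiMap v i) {P : Finset (ℕ × ℕ) | P ⊆ Rothe v ∧ zlastBox v i ∈ P}
      {Q : Finset (ℕ × ℕ) | Q ⊆ Rothe (v * adjSwap i)} := by
  refine ⟨?_, ?_, ?_⟩
  · rintro P ⟨hP, -⟩
    rw [Set.mem_ofPred_eq, phiMap_eq, Rothe_mul_adjSwap hi]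
    exact Finset.image_subset_image (Finset.erase_subset_erase _ hP)
  · rintro P ⟨hP, hz⟩ P' ⟨hP', hz'⟩ h
    simp only [phiMap_eq] at h
    rw [← Finset.insert_erase hz, ← Finset.insert_erase hz']
    congr 1
    have h1 := (Finset.erase_subset (zlastBox v i) P).trans hP
    have h2 := (Finset.erase_subset (zlastBox v i) P').trans hP'
    apply Finset.coe_injective
    refine ((boxShift_injOn hi).image_eq_image_iff (by exact_mod_cast h1)
      (by exact_mod_cast h2)).1 ?_
    simpa only [Finset.coe_image] using congrArg (fun s : Finset (ℕ × ℕ) => (s : Set (ℕ × ℕ))) h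
  · intro Q hQ
    rw [Set.mem_ofPred_eq, Rothe_mul_adjSwap hi] at hQ
    obtain ⟨R, hR, rfl⟩ := Finset.subset_image_iff.1 hQ
    have hR' : R ⊆ (Rothe v).erase (zlastBox v i) := by exact_mod_cast hR
    have hz : zlastBox v i ∉ R := fun h => absurd (hR' h) (Finset.notMem_erase _ _)
    refine ⟨insert (zlastBox v i) R, ⟨?_, Finset.mem_insert_self _ _⟩, ?_⟩
    · exact Finset.insert_subset (zlastBox_mem hi) (hR'.trans (Finset.erase_subset _ _))
    · rw [phiMap_eq, Finset.erase_insert hz]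

end LastAscent

/-- Theorem 6.4(B), Claim 6.8: vertex decomposition of the pipe
complex at `z_last` when `i` is an ascent of `w`: `φ` is a bijection onto the subsets of
`D(v s_i)`, matching the link of `z_last` with `Δ_{v s_i, w}` and the deletion with
`Δ_{v s_i, w s_i}`. -/
theorem ascent_vertex_decomposition (n : ℕ) (v w : Equiv.Perm (Fin n)) (i : ℕ)
    (hv : v ≠ longest) (hi : IsLastAscent v i)
    (hw : invCount w < invCount (w * adjSwap i)) :
    Set.BijOn (phiMap v i) {P : Finset (ℕ × ℕ) | P ⊆ Rothe v ∧ zlastBox v i ∈ P}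
      {Q : Finset (ℕ × ℕ) | Q ⊆ Rothe (v * adjSwap i)} ∧
    (∀ P : Finset (ℕ × ℕ), P ⊆ Rothe v → zlastBox v i ∈ P →
      (IsFace v w (Rothe v \ (P.erase (zlastBox v i)))
        ↔ IsFace (v * adjSwap i) w (Rothe (v * adjSwap i) \ phiMap v i P)) ∧
      (IsFace v w (Rothe v \ P)
        ↔ IsFace (v * adjSwap i) (w * adjSwap i)
            (Rothe (v * adjSwap i) \ phiMap v i P))) := by
  have hx : invCount (longest * w * adjSwap i) < invCount (longest * w) := by
    have h1 := invCount_longest_mul w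
    have h2 := invCount_longest_mul (w * adjSwap i)
    rw [mul_assoc]
    omega
  refine ⟨phiMap_bijOn hi, fun P hP hz => ⟨?_, ?_⟩⟩
  · rw [isFace_phiMap hi hP, isFace_sdiff ((Finset.erase_subset _ _).trans hP)]
  · rw [isFace_phiMap hi hP, isFace_sdiff hP, exists_red_iff hi hP hz hx, mul_assoc]

end
end

section
/- Let v ∈ S_n with v ≠ w_0, and let i be the last ascent of v (the largest index with v(i) < v(i+1)). Then the box (n−v(i+1)+1, i) belongs to D(v); the diagrams D(v) and D(v s_i) coincide in every column other than i and i+1; and D(v s_i) is obtained from D(v) by deleting the box (n−v(i+1)+1, i) and moving every other box of D(v) in column i one step to the right: D(v s_i) = {(r,j) ∈ D(v) : j ≠ i} ∪ {(r, i+1) : (r,i) ∈ D(v) and r ≠ n−v(i+1)+1}. -/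
/-!
In 0-based coordinates `(r, j)` lies in `D(v)` exactly when `j < k` and `v j < v k`, where `k` is
the position of the value `n - 1 - r`; so the boxes of `D(v)` are the non-inversions `(j, k)` of
`v`, the box of `(j, k)` being in column `j` and in the row given by `v k`
(`mem_Rothe_iff`).  Let `a = i - 1` and `b = i` be the two positions exchanged by `s_i`.  As `i` is
the last ascent, `v` is strictly decreasing from `b` on (`lt_of_last_ascent`), so no non-inversion
starts at `b` or later.  Multiplying by `s_i` therefore removes the non-inversion `(a, b)`, turns
each `(a, k)` with `k > b` into `(b, k)` in the same row, and keeps the column and the row of each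
non-inversion starting before `a`.
-/


open Equiv MvPolynomial

noncomputable section
open scoped Classical

variable {n : ℕ}

/-- The boxes of the Rothe diagram are the non-inversions `(a, k)` of `v`, placed in column `a`
and in the row determined by the value `v k`. -/
lemma mem_Rothe_iff {n : ℕ} (v : Equiv.Perm (Fin n)) (r j : ℕ) :
    (r, j) ∈ Rothe v ↔
      ∃ a k : Fin n, a < k ∧ v a < v k ∧ (a : ℕ) = j ∧ r + (v k : ℕ) + 1 = n := by
  simp only [Rothe, Finset.mem_filter, Finset.mem_product, Finset.mem_range]
  constructor
  · rintro ⟨⟨hr, hj⟩, h1, h2⟩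
    have hy : n - 1 - r < n := by omega
    simp only [permVal, hj, hy, dif_pos] at h1 h2
    refine ⟨⟨j, hj⟩, v.symm ⟨n - 1 - r, hy⟩, h2, ?_, rfl, ?_⟩
    · rw [Equiv.apply_symm_apply, Fin.lt_def]
      simp only
      omega
    · rw [Equiv.apply_symm_apply]
      simp only
      omega
  · rintro ⟨a, k, hak, hv, rfl, hr⟩
    have hy : n - 1 - r = (v k : ℕ) := by omega
    rw [Fin.lt_def] at hak hv
    refine ⟨⟨by omega, a.2⟩, ?_, ?_⟩
    · simp only [permVal, a.2, dif_pos, Fin.eta]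
      omega
    · rw [hy]
      simpa [permVal] using hak

/-- A permutation is strictly decreasing from the position following its last ascent. -/
lemma lt_of_last_ascent {n : ℕ} (v : Equiv.Perm (Fin n)) (i : ℕ) (hi : IsLastAscent v i)
    (j k : Fin n) (hij : i ≤ j) (hjk : j < k) : v k < v j := by
  obtain ⟨-, -, -, h⟩ := hi
  have key : ∀ d : ℕ, ∀ hd : j + d + 1 < n, v ⟨j + d + 1, hd⟩ < v j := by
    intro d
    -- an index with no ascent is a strict descent, since `v` is injective
    have step : ∀ m (hm : m + 1 < n), i ≤ m →
        v ⟨m + 1, hm⟩ < v ⟨m, by omega⟩ := by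
      intro m hm him
      have h1 := h (m + 1) (by omega) hm
      have hm' : m < n := by omega
      simp only [permVal, Nat.add_sub_cancel, hm, hm', dif_pos, not_lt] at h1
      refine lt_of_le_of_ne h1 fun e => ?_
      have := congrArg Fin.val (v.injective e)
      simp at this
    induction d with
    | zero => intro hd; exact step j hd hij
    | succ d ih =>
      intro hd
      exact (step (j + d + 1) hd (by omega)).trans (ih (by omega))
  rw [Fin.lt_def] at hjk
  have := key (k - j - 1) (by omega)
  have e : (⟨j + (k - j - 1) + 1, by omega⟩ : Fin n) = k := Fin.ext (by simp only; omega)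
  rwa [e] at this

/-- The boxes of `D(v s_i)` for `i` the last ascent: column `i` (1-based) is emptied, and its
boxes, other than the one of the row of `v (i + 1)`, fill column `i + 1`. -/
lemma mem_Rothe_mul_iff {n : ℕ} (v : Equiv.Perm (Fin n)) (i : ℕ) (hi : IsLastAscent v i)
    (r j : ℕ) :
    (r, j) ∈ Rothe (v * adjSwap i) ↔
      ((r, j) ∈ Rothe v ∧ j ≠ i - 1) ∨
        ((r, i - 1) ∈ Rothe v ∧ r ≠ n - permVal v i - 1 ∧ j = i) := by
  have hanti := lt_of_last_ascent v i hi
  obtain ⟨h1, hn, hasc, -⟩ := hi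
  have hi1 : i - 1 < n := by omega
  simp only [permVal, hn, hi1, dif_pos] at hasc ⊢
  have hs : (adjSwap i : Equiv.Perm (Fin n)) = Equiv.swap ⟨i - 1, hi1⟩ ⟨i, hn⟩ := by
    simp [adjSwap, h1, hn]
  rw [hs]
  have hsa := Equiv.swap_apply_left (⟨i - 1, hi1⟩ : Fin n) ⟨i, hn⟩
  have hsb := Equiv.swap_apply_right (⟨i - 1, hi1⟩ : Fin n) ⟨i, hn⟩
  have hso : ∀ x : Fin n, (x : ℕ) ≠ i - 1 → (x : ℕ) ≠ i →
      Equiv.swap (⟨i - 1, hi1⟩ : Fin n) ⟨i, hn⟩ x = x := fun x hx hx' =>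
    Equiv.swap_apply_of_ne_of_ne (fun e => hx (by rw [e])) (fun e => hx' (by rw [e]))
  have hss := Equiv.swap_swap (⟨i - 1, hi1⟩ : Fin n) ⟨i, hn⟩
  have hinv : ∀ x, Equiv.swap (⟨i - 1, hi1⟩ : Fin n) ⟨i, hn⟩
      (Equiv.swap (⟨i - 1, hi1⟩ : Fin n) ⟨i, hn⟩ x) = x := Equiv.swap_apply_self _ _
  generalize Equiv.swap (⟨i - 1, hi1⟩ : Fin n) ⟨i, hn⟩ = s at *
  have hcase : ∀ x : Fin n, x = ⟨i - 1, hi1⟩ ∨ x = ⟨i, hn⟩ ∨ ((x : ℕ) ≠ i - 1 ∧ (x : ℕ) ≠ i) := by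
    intro x
    simp only [Fin.ext_iff]
    tauto
  simp only [mem_Rothe_iff, Equiv.Perm.mul_apply]
  constructor
  · rintro ⟨x, k, hxk, hv, rfl, hr⟩
    rw [Fin.lt_def] at hxk
    rcases hcase x with rfl | rfl | ⟨hx, hx'⟩
    · -- column `i - 1` of `D(v s_i)` is empty
      exfalso
      rw [hsa] at hv
      rcases hcase k with rfl | rfl | ⟨hk, hk'⟩
      · simp at hxk
      · rw [hsb, Fin.lt_def] at hv
        omega
      · rw [hso k hk hk'] at hv
        simp only at hxk
        exact lt_asymm hv (hanti ⟨i, hn⟩ k le_rfl (by rw [Fin.lt_def]; simp only; omega))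
    · have hk : (k : ℕ) ≠ i - 1 ∧ (k : ℕ) ≠ i := by simp only at hxk; omega
      simp only at hxk
      rw [hsb, hso k hk.1 hk.2] at hv
      rw [hso k hk.1 hk.2] at hr
      refine Or.inr ⟨⟨⟨i - 1, hi1⟩, k, by rw [Fin.lt_def]; simp only; omega, hv, rfl, hr⟩, ?_, rfl⟩
      have := hanti ⟨i, hn⟩ k le_rfl hxk
      rw [Fin.lt_def] at this
      omega
    · rw [hso x hx hx'] at hv
      refine Or.inl ⟨⟨x, s k, ?_, hv, rfl, hr⟩, hx⟩
      rw [Fin.lt_def]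
      rcases hcase k with rfl | rfl | ⟨hk, hk'⟩
      · rw [hsa]; simp only at hxk ⊢; omega
      · rw [hsb]; simp only at hxk ⊢; omega
      · rwa [hso k hk hk']
  · rintro (⟨⟨x, k, hxk, hv, rfl, hr⟩, hx⟩ | ⟨⟨x, k, hxk, hv, hx, hr⟩, hne, rfl⟩)
    · have hx' : (x : ℕ) < i := by
        by_contra hc
        exact lt_asymm hv (hanti x k (by omega) hxk)
      refine ⟨x, s k, ?_, by rwa [hinv, hso x hx hx'.ne], rfl, by rwa [hinv]⟩
      rw [Fin.lt_def] at hxk ⊢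
      rcases hcase k with rfl | rfl | ⟨hk, hk'⟩
      · rw [hsa]; simp only at hxk ⊢; omega
      · rw [hsb]; simp only at hxk ⊢; omega
      · rwa [hso k hk hk']
    · obtain rfl : x = ⟨j - 1, hi1⟩ := Fin.ext hx
      rw [Fin.lt_def] at hxk
      simp only at hxk
      have hk : (k : ℕ) ≠ j := by
        intro e
        obtain rfl : k = ⟨j, hn⟩ := Fin.ext e
        omega
      have hsk := hso k (by omega) hk
      exact ⟨⟨j, hn⟩, k, by rw [Fin.lt_def]; simp only; omega, by rwa [hsb, hsk], rfl, by rwa [hsk]⟩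

/-- Lemma 6.3: how the Rothe diagram changes under the last ascent:
`z_last ∈ D(v)`, the diagrams `D(v)` and `D(v s_i)` agree away from columns `i`, `i+1`
(1-based), and `D(v s_i)` is obtained from `D(v)` by deleting `z_last` and shifting the
rest of its column one step to the right. -/
theorem rothe_last_ascent (n : ℕ) (v : Equiv.Perm (Fin n)) (i : ℕ)
    (hv : v ≠ longest) (hi : IsLastAscent v i) :
    zlastBox v i ∈ Rothe v ∧
    (∀ r j : ℕ, j ≠ i - 1 → j ≠ i →
      ((r, j) ∈ Rothe (v * adjSwap i) ↔ (r, j) ∈ Rothe v)) ∧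
    Rothe (v * adjSwap i) = phiMap v i (Rothe v) := by
  refine ⟨?_, ?_, ?_⟩
  · obtain ⟨h1, hn, hasc, -⟩ := hi
    have hi1 : i - 1 < n := by omega
    simp only [permVal, hn, hi1, dif_pos] at hasc
    refine (mem_Rothe_iff v _ _).2 ⟨⟨i - 1, hi1⟩, ⟨i, hn⟩, ?_, hasc, rfl, ?_⟩
    · rw [Fin.lt_def]
      simp only
      omega
    · simp only [permVal, hn, dif_pos]
      omega
  · intro r j hj hj'
    rw [mem_Rothe_mul_iff v i hi]
    tauto
  · have hi1 := hi.1
    ext ⟨r, j⟩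
    rw [mem_Rothe_mul_iff v i hi]
    simp only [phiMap, Finset.mem_union, Finset.mem_filter, Finset.mem_image, Prod.mk.injEq,
      Prod.exists]
    refine or_congr Iff.rfl ⟨?_, ?_⟩
    · rintro ⟨h, hr, rfl⟩
      exact ⟨r, j - 1, ⟨h, rfl, hr⟩, rfl, by omega⟩
    · rintro ⟨r', j', ⟨h, rfl, hr⟩, rfl, rfl⟩
      exact ⟨h, hr, by omega⟩

end
end
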